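/- arXiv:2204.09512 — 2 statements merged into one kernel-verified Lean document; each statement's English description precedes it below -/
import Mathlib

section
/- Let X be a topological space and let A be either a closed subset or a saturated subset of X, equipped with the subspace topology. If X is sober, then A is sober; if X is well-filtered, then A is well-filtered; if X is a d-space, then A is a d-space. -/
universe u v

open Set

/-- The specialization order on a topological space: `specLE x y` iff `x ∈ closure {y}`. -/
def specLE {X : Type*} [TopologicalSpace X] (x y : X) : Prop :=
  x ∈ closure ({y} : Set X)

/-- `a` is an upper bound of `D` with respect to the specialization order. -/
def specUB {X : Type*} [TopologicalSpace X] (D : Set X) (a : X) : Prop :=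
  ∀ d ∈ D, specLE d a

/-- `a` is a least upper bound of `D` with respect to the specialization order. -/
def specLUB {X : Type*} [TopologicalSpace X] (D : Set X) (a : X) : Prop :=
  specUB D a ∧ ∀ b, specUB D b → specLE a b

/-- `U` is Scott open with respect to the specialization order. -/
def ScottOpenSpec {X : Type*} [TopologicalSpace X] (U : Set X) : Prop :=
  (∀ x y, specLE x y → x ∈ U → y ∈ U) ∧
  ∀ D : Set X, D.Nonempty → DirectedOn specLE D → ∀ a, specLUB D a → a ∈ U →
    (D ∩ U).Nonempty

/-- A d-space (monotone convergence space): a T0 space which is a dcpo in its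
specialization order and in which every open set is Scott open with respect to
the specialization order. -/
def DSpace (X : Type*) [TopologicalSpace X] : Prop :=
  T0Space X ∧
  (∀ D : Set X, D.Nonempty → DirectedOn specLE D → ∃ a, specLUB D a) ∧
  (∀ U : Set X, IsOpen U → ScottOpenSpec U)

/-- A set is saturated if it is an intersection of open sets. -/
def Saturated {X : Type*} [TopologicalSpace X] (A : Set X) : Prop :=
  ∃ 𝒰 : Set (Set X), (∀ U ∈ 𝒰, IsOpen U) ∧ A = ⋂₀ 𝒰

/-- A T0 space is well-filtered if every filtered (under reverse inclusion) family of
nonempty compact saturated sets whose intersection is contained in an open set `U`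
has a member contained in `U`. -/
def WellFiltered (X : Type*) [TopologicalSpace X] : Prop :=
  T0Space X ∧
  ∀ 𝒦 : Set (Set X), 𝒦.Nonempty →
    (∀ K ∈ 𝒦, K.Nonempty ∧ IsCompact K ∧ Saturated K) →
    DirectedOn (fun A B => B ⊆ A) 𝒦 →
    ∀ U : Set X, IsOpen U → ⋂₀ 𝒦 ⊆ U → ∃ K ∈ 𝒦, K ⊆ U

/-- A nonempty closed set which is irreducible. -/
def IrredClosed {X : Type*} [TopologicalSpace X] (A : Set X) : Prop :=
  A.Nonempty ∧ IsClosed A ∧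
  ∀ F₁ F₂ : Set X, IsClosed F₁ → IsClosed F₂ → A ⊆ F₁ ∪ F₂ → (A ⊆ F₁ ∨ A ⊆ F₂)

/-- A space is sober if every irreducible closed set is the closure of a unique point. -/
def Sober (X : Type*) [TopologicalSpace X] : Prop :=
  ∀ A : Set X, IrredClosed A → ∃! x : X, A = closure ({x} : Set X)

/-- The specialization preorder on a topological space. -/
def specPreorder (Y : Type*) [TopologicalSpace Y] : Preorder Y where
  le := specLE
  le_refl x := subset_closure rfl
  le_trans x y z hxy hyz :=
    closure_minimal (Set.singleton_subset_iff.mpr hyz) isClosed_closure hxy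

/-- A Scott open subset of a poset: an upper set inaccessible by suprema of directed sets. -/
def IsScottOpen {P : Type*} [Preorder P] (U : Set P) : Prop :=
  IsUpperSet U ∧
  ∀ D : Set P, D.Nonempty → DirectedOn (· ≤ ·) D → ∀ a, IsLUB D a → a ∈ U →
    (D ∩ U).Nonempty

/-- The Scott topology on a poset. `Σ P` is `P` equipped with `scottTop P`. -/
def scottTop (P : Type*) [Preorder P] : TopologicalSpace P where
  IsOpen := IsScottOpen
  isOpen_univ := by
    refine ⟨isUpperSet_univ, fun D hD _ _ _ _ => ?_⟩
    obtain ⟨d, hd⟩ := hD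
    exact ⟨d, hd, trivial⟩
  isOpen_inter := by
    rintro U V ⟨hU1, hU2⟩ ⟨hV1, hV2⟩
    refine ⟨hU1.inter hV1, ?_⟩
    rintro D hne hdir a ha ⟨haU, haV⟩
    obtain ⟨d1, hd1D, hd1U⟩ := hU2 D hne hdir a ha haU
    obtain ⟨d2, hd2D, hd2V⟩ := hV2 D hne hdir a ha haV
    obtain ⟨d3, hd3D, h13, h23⟩ := hdir d1 hd1D d2 hd2D
    exact ⟨d3, hd3D, hU1 h13 hd1U, hV1 h23 hd2V⟩
  isOpen_sUnion := by
    intro S hS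
    refine ⟨isUpperSet_sUnion fun s hs => (hS s hs).1, ?_⟩
    rintro D hne hdir a ha ⟨U, hUS, haU⟩
    obtain ⟨d, hdD, hdU⟩ := (hS U hUS).2 D hne hdir a ha haU
    exact ⟨d, hdD, U, hUS, hdU⟩

/-- A dcpo: every nonempty directed subset has a least upper bound. -/
def IsDcpo (P : Type*) [Preorder P] : Prop :=
  ∀ D : Set P, D.Nonempty → DirectedOn (· ≤ ·) D → ∃ a, IsLUB D a

/-- The way-below relation. -/
def wayBelow {P : Type*} [Preorder P] (x y : P) : Prop :=
  ∀ D : Set P, D.Nonempty → DirectedOn (· ≤ ·) D → ∀ a, IsLUB D a → y ≤ a →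
    ∃ d ∈ D, x ≤ d

/-- A poset is Noetherian if every (nonempty) directed subset has a greatest member. -/
def Noetherian (P : Type*) [Preorder P] : Prop :=
  ∀ D : Set P, D.Nonempty → DirectedOn (· ≤ ·) D → ∃ m ∈ D, ∀ d ∈ D, d ≤ m

/-- An ideal: a (nonempty) directed lower set. -/
def IsIdealSet {P : Type*} [Preorder P] (I : Set P) : Prop :=
  I.Nonempty ∧ DirectedOn (· ≤ ·) I ∧ IsLowerSet I

/-- The Alexandroff topology on a poset: the open sets are the upper sets. -/
def alexTop (P : Type*) [Preorder P] : TopologicalSpace P where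
  IsOpen := IsUpperSet
  isOpen_univ := isUpperSet_univ
  isOpen_inter _ _ := IsUpperSet.inter
  isOpen_sUnion _ h := isUpperSet_sUnion h

/-- The space `X_⊤` obtained from `X` by adjoining a new top point `⊤` (here `none`):
the closed sets are the closed sets of `X` together with the whole space. -/
def topTop (X : Type*) [TopologicalSpace X] : TopologicalSpace (Option X) where
  IsOpen V := V = ∅ ∨ ∃ U : Set X, IsOpen U ∧ V = insert none (some '' U)
  isOpen_univ := by
    refine Or.inr ⟨Set.univ, isOpen_univ, ?_⟩
    ext (_ | a) <;> simp
  isOpen_inter := by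
    rintro V W (rfl | ⟨U₁, hU₁, rfl⟩) hW
    · exact Or.inl (by simp)
    rcases hW with rfl | ⟨U₂, hU₂, rfl⟩
    · exact Or.inl (by simp)
    · refine Or.inr ⟨U₁ ∩ U₂, hU₁.inter hU₂, ?_⟩
      ext (_ | a) <;> simp
  isOpen_sUnion := by
    classical
    intro S hS
    by_cases h0 : ⋃₀ S = ∅
    · exact Or.inl h0
    · refine Or.inr ⟨{x : X | some x ∈ ⋃₀ S}, ?_, ?_⟩
      · have h1 : {x : X | some x ∈ ⋃₀ S} = ⋃ V ∈ S, some ⁻¹' V := by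
          ext x; simp [Set.mem_sUnion]
        rw [h1]
        refine isOpen_biUnion fun V hV => ?_
        rcases hS V hV with rfl | ⟨U, hU, rfl⟩
        · rw [Set.preimage_empty]; exact isOpen_empty
        · have h2 : (some ⁻¹' (insert none (some '' U)) : Set X) = U := by
            ext x; simp
          rw [h2]; exact hU
      · have hnone : (none : Option X) ∈ ⋃₀ S := by
          obtain ⟨v, V, hVS, hvV⟩ := Set.nonempty_iff_ne_empty.mpr h0
          rcases hS V hVS with rfl | ⟨U, hU, rfl⟩
          · exact absurd hvV (by simp)
          · exact ⟨_, hVS, by simp⟩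
        ext (_ | a)
        · simp only [Set.mem_insert_iff, true_or, iff_true]
          exact hnone
        · simp [Set.mem_sUnion]

/-- A `𝐊`-set of a space `X` (relative to a class `K` of spaces): a set whose image
under any continuous map to a `𝐊`-space has the closure of a unique point as closure. -/
def IsKSet (K : (Y : Type u) → TopologicalSpace Y → Prop)
    (X : Type u) [tX : TopologicalSpace X] (A : Set X) : Prop :=
  ∀ (Y : Type u) (tY : TopologicalSpace Y), K Y tY →
    ∀ f : X → Y, @Continuous X Y tX tY f →
      ∃! y : Y, @closure Y tY (f '' A) = @closure Y tY {y}

/-- `𝐊(X)`: the collection of closed `𝐊`-sets of `X`. -/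
def KSets (K : (Y : Type u) → TopologicalSpace Y → Prop)
    (X : Type u) [TopologicalSpace X] : Set (Set X) :=
  {A : Set X | IsClosed A ∧ IsKSet K X A}

/-- The lower Vietoris topology on a family `G` of subsets of `X`, generated by the
sets `◊U = {A ∈ G | A ∩ U ≠ ∅}` for `U` open. -/
def lowerVietoris {X : Type*} [TopologicalSpace X] (G : Set (Set X)) :
    TopologicalSpace ↥G :=
  TopologicalSpace.generateFrom
    {S : Set ↥G | ∃ U : Set X, IsOpen U ∧ S = {A : ↥G | ((A : Set X) ∩ U).Nonempty}}

/-- A class `K` of spaces is adequate if `P_H(𝐊(X))` is a `𝐊`-space for every T0 space `X`. -/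
def Adequate (K : (Y : Type u) → TopologicalSpace Y → Prop) : Prop :=
  ∀ (X : Type u) (tX : TopologicalSpace X), @T0Space X tX →
    K ↥(@KSets K X tX) (@lowerVietoris X tX (@KSets K X tX))

/-- `⟨Z, η⟩` is a `𝐊`-reflection of `X`. -/
def IsKReflection (K : (Y : Type u) → TopologicalSpace Y → Prop)
    (X : Type u) (tX : TopologicalSpace X)
    (Z : Type u) (tZ : TopologicalSpace Z) (η : X → Z) : Prop :=
  K Z tZ ∧ @Continuous X Z tX tZ η ∧
  ∀ (Y : Type u) (tY : TopologicalSpace Y), K Y tY →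
    ∀ f : X → Y, @Continuous X Y tX tY f →
      ∃! g : Z → Y, @Continuous Z Y tZ tY g ∧ g ∘ η = f

/-- The carrier of the Johnstone poset `𝕁 = ℕ × (ℕ ∪ {ω})`. -/
structure Johnstone where
  fst : ℕ
  snd : WithTop ℕ

/-- The Johnstone order: `(j, k) ≤ (m, n)` iff `j = m` and `k ≤ n`, or `n = ω` and `k ≤ m`. -/
instance : PartialOrder Johnstone where
  le p q := (p.fst = q.fst ∧ p.snd ≤ q.snd) ∨ (q.snd = ⊤ ∧ p.snd ≤ (q.fst : WithTop ℕ))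
  le_refl p := Or.inl ⟨rfl, le_rfl⟩
  le_trans p q r hpq hqr := by
    rcases hpq with ⟨h1, h2⟩ | ⟨h1, h2⟩ <;> rcases hqr with ⟨h3, h4⟩ | ⟨h3, h4⟩
    · exact Or.inl ⟨h1.trans h3, h2.trans h4⟩
    · exact Or.inr ⟨h3, h2.trans h4⟩
    · have hr : r.snd = ⊤ := top_le_iff.mp (h1 ▸ h4)
      exact Or.inr ⟨hr, h3 ▸ h2⟩
    · rw [h1] at h4
      exact absurd h4 (by simp)
  le_antisymm p q hpq hqp := by
    obtain ⟨pf, ps⟩ := p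
    obtain ⟨qf, qs⟩ := q
    rcases hpq with ⟨h1, h2⟩ | ⟨h1, h2⟩ <;> rcases hqp with ⟨h3, h4⟩ | ⟨h3, h4⟩
    · dsimp at *
      cases h1
      cases le_antisymm h2 h4
      rfl
    · dsimp at *
      rw [h3] at h2
      rw [top_le_iff.mp h2] at h4
      exact absurd h4 (by simp)
    · dsimp at *
      rw [h1] at h4
      rw [top_le_iff.mp h4] at h2
      exact absurd h2 (by simp)
    · dsimp at *
      rw [h3] at h2
      exact absurd h2 (by simp)

/-- The class of d-spaces. -/
def dClass : (Y : Type u) → TopologicalSpace Y → Prop := fun Y tY => @DSpace Y tY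

/-- The class of well-filtered spaces. -/
def wfClass : (Y : Type u) → TopologicalSpace Y → Prop := fun Y tY => @WellFiltered Y tY

/-- The class of sober spaces. -/
def soberClass : (Y : Type u) → TopologicalSpace Y → Prop := fun Y tY => @Sober Y tY

/-!
Sober spaces, well-filtered spaces and d-spaces are the T0 spaces in which the closure of every
irreducible set, Rudin set or directed set, respectively, has a generic point. All three kinds of
sets are preserved by continuous images, in particular by the inclusion of a subspace `A`. If `x`
is a generic point of the closure of some `B ⊆ A`, then `x ∈ closure (A ∩ closure {x})`, so `x`
lies in `A` as soon as `A` is closed in the front topology, and both closed and saturated sets are.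
-/

section Specialization

variable {X Y : Type*} [TopologicalSpace X] [TopologicalSpace Y]

theorem specLE_iff_specializes {x y : X} : specLE x y ↔ y ⤳ x :=
  specializes_iff_mem_closure.symm

theorem Saturated.stableUnderGeneralization {A : Set X} (hA : Saturated A) :
    StableUnderGeneralization A :=
  stableUnderGeneralization_iff_exists_sInter_eq.2 <| hA.imp fun _ h => ⟨h.1, h.2.symm⟩

theorem saturated_nhdsKer (A : Set X) : Saturated (nhdsKer A) :=
  ⟨_, fun _ hU => hU.1, nhdsKer_def A⟩

theorem specUB_iff_closure_subset {D : Set X} {a : X} :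
    specUB D a ↔ closure D ⊆ closure {a} :=
  isClosed_closure.closure_subset_iff.symm

theorem directedOn_specLE_image {D : Set Y} (hD : DirectedOn specLE D) {f : Y → X}
    (hf : Continuous f) : DirectedOn specLE (f '' D) :=
  hD.mono_comp fun _ _ h =>
    specLE_iff_specializes.2 ((specLE_iff_specializes.1 h).map hf)

end Specialization

section FrontClosed

variable {X : Type*} [TopologicalSpace X] {A : Set X}

/-- `A` is closed in the front topology (also called the b-topology or Skula topology) of `X`,
which has the sets `U ∩ closure {x}` with `x ∈ U` and `U` open as basic neighbourhoods of `x`.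
It is the common generalization of closed and saturated sets used to treat both at once. -/
def FrontClosed (A : Set X) : Prop :=
  ∀ x, x ∈ closure (A ∩ closure {x}) → x ∈ A

theorem frontClosed_of_isClosed (hA : IsClosed A) : FrontClosed A :=
  fun _ hx => closure_minimal inter_subset_left hA hx

theorem Saturated.frontClosed (hA : Saturated A) : FrontClosed A := by
  intro x hx
  obtain ⟨y, hyA, hyx⟩ := closure_nonempty_iff.1 ⟨x, hx⟩
  exact hA.stableUnderGeneralization (specializes_iff_mem_closure.2 hyx) hyA

theorem FrontClosed.exists_isGenericPoint_closure (hA : FrontClosed A) {B : Set A} {x : X}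
    (hx : IsGenericPoint x (closure ((↑) '' B))) : ∃ a : A, IsGenericPoint a (closure B) := by
  have hBx : (↑) '' B ⊆ A ∩ closure {x} :=
    subset_inter (Subtype.coe_image_subset A B) (hx.def ▸ subset_closure)
  have hxA : x ∈ A := hA x (closure_mono hBx hx.mem)
  refine ⟨⟨x, hxA⟩, ?_⟩
  rw [isGenericPoint_def, Topology.IsInducing.subtypeVal.closure_eq_preimage_closure_image,
    Topology.IsInducing.subtypeVal.closure_eq_preimage_closure_image B, image_singleton, hx.def]

end FrontClosed

section Sober

variable {X : Type*} [TopologicalSpace X]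

theorem irredClosed_iff {C : Set X} : IrredClosed C ↔ IsIrreducible C ∧ IsClosed C := by
  rw [IrredClosed, IsIrreducible, isPreirreducible_iff_isClosed_union_isClosed]
  tauto

theorem Sober.t0Space (hX : Sober X) : T0Space X where
  t0 x y hxy := by
    have hirr : IrredClosed (closure {x}) :=
      irredClosed_iff.2 ⟨isIrreducible_singleton.closure, isClosed_closure⟩
    exact (hX _ hirr).unique rfl (inseparable_iff_closure_eq.1 hxy)

theorem sober_iff_exists_isGenericPoint :
    Sober X ↔
      T0Space X ∧ ∀ B : Set X, IsIrreducible B → ∃ x, IsGenericPoint x (closure B) := by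
  constructor
  · intro hX
    refine ⟨hX.t0Space, fun B hB => ?_⟩
    obtain ⟨x, hx, -⟩ := hX _ (irredClosed_iff.2 ⟨hB.closure, isClosed_closure⟩)
    exact ⟨x, hx.symm⟩
  · rintro ⟨_, hX⟩ C hC
    obtain ⟨hirr, hcl⟩ := irredClosed_iff.1 hC
    obtain ⟨x, hx⟩ := hX C hirr
    rw [hcl.closure_eq] at hx
    exact ⟨x, hx.symm, fun y hy => IsGenericPoint.eq hy.symm hx⟩

theorem Sober.subtype (hX : Sober X) {A : Set X} (hA : FrontClosed A) : Sober A := by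
  obtain ⟨_, hgen⟩ := sober_iff_exists_isGenericPoint.1 hX
  refine sober_iff_exists_isGenericPoint.2 ⟨inferInstance, fun B hB => ?_⟩
  obtain ⟨x, hx⟩ := hgen _ (hB.image _ continuous_subtype_val.continuousOn)
  exact hA.exists_isGenericPoint_closure hx

end Sober

section WellFiltered

variable {X Y : Type*} [TopologicalSpace X] [TopologicalSpace Y]

/-- `B` is a Rudin set: its closure is minimal among the closed sets meeting every member of some
filtered family of compact sets. Rudin sets play for well-filtered spaces the role that irreducible
sets play for sober ones. The usual definition takes the compact sets saturated; this is no
restriction, as a closed set meets `K` if and only if it meets the saturation of `K`. -/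
def IsRudinSet (B : Set X) : Prop :=
  ∃ 𝒦 : Set (Set X), 𝒦.Nonempty ∧ (∀ K ∈ 𝒦, IsCompact K) ∧
    DirectedOn (fun K L => L ⊆ K) 𝒦 ∧
    Minimal (fun C => IsClosed C ∧ ∀ K ∈ 𝒦, (K ∩ C).Nonempty) (closure B)

theorem IsRudinSet.image {B : Set Y} (hB : IsRudinSet B) {f : Y → X} (hf : Continuous f) :
    IsRudinSet (f '' B) := by
  obtain ⟨𝒦, hne, hcomp, hdir, ⟨-, hmeet⟩, hmin⟩ := hB
  refine ⟨(fun K => f '' (K ∩ closure B)) '' 𝒦, hne.image _, ?_, ?_, ⟨isClosed_closure, ?_⟩, ?_⟩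
  · rintro _ ⟨K, hK, rfl⟩
    exact ((hcomp K hK).inter_right isClosed_closure).image hf
  · exact hdir.mono_comp fun _ _ h => image_mono (inter_subset_inter_left _ h)
  · rintro _ ⟨K, hK, rfl⟩
    obtain ⟨y, hy⟩ := hmeet K hK
    exact ⟨f y, mem_image_of_mem f hy, image_closure_subset_closure_image hf ⟨y, hy.2, rfl⟩⟩
  · rintro E ⟨hE, hEmeet⟩ -
    have hpre : ∀ K ∈ 𝒦, (K ∩ (closure B ∩ f ⁻¹' E)).Nonempty := by
      intro K hK
      obtain ⟨_, ⟨y, ⟨hyK, hyB⟩, rfl⟩, hyE⟩ := hEmeet _ (mem_image_of_mem _ hK)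
      exact ⟨y, hyK, hyB, hyE⟩
    have hsub : closure B ⊆ closure B ∩ f ⁻¹' E :=
      hmin ⟨isClosed_closure.inter (hE.preimage hf), hpre⟩ inter_subset_left
    exact closure_minimal
      (image_subset_iff.2 fun _ hb => (hsub (subset_closure hb)).2) hE

theorem exists_minimal_isClosed_inter_nonempty {𝒦 : Set (Set X)} (h𝒦 : ∀ K ∈ 𝒦, IsCompact K)
    {F : Set X} (hF : IsClosed F) (hmeet : ∀ K ∈ 𝒦, (K ∩ F).Nonempty) :
    ∃ C ⊆ F, Minimal (fun C => IsClosed C ∧ ∀ K ∈ 𝒦, (K ∩ C).Nonempty) C := by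
  refine zorn_superset_nonempty {C | IsClosed C ∧ ∀ K ∈ 𝒦, (K ∩ C).Nonempty} ?_ F ⟨hF, hmeet⟩
  intro c hc hchain hne
  refine ⟨⋂₀ c, ⟨isClosed_sInter fun C hC => (hc hC).1, fun K hK => ?_⟩,
    fun C hC => sInter_subset_of_mem hC⟩
  by_contra hempty
  have : Nonempty c := hne.to_subtype
  obtain ⟨⟨C, hC⟩, hKC⟩ := (h𝒦 K hK).elim_directed_family_closed
    (fun C : c => (C : Set X)) (fun C => (hc C.2).1)
    (by rwa [← sInter_eq_iInter, ← not_nonempty_iff_eq_empty])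
    (show IsChain (· ⊇ ·) c from hchain.symm).directedOn.directed_val
  exact ((hc hC).2 K hK).ne_empty hKC

theorem WellFiltered.inter_sInter_nhdsKer_nonempty (hX : WellFiltered X) {𝒦 : Set (Set X)}
    (hne : 𝒦.Nonempty) (hcomp : ∀ K ∈ 𝒦, IsCompact K) (hdir : DirectedOn (fun K L => L ⊆ K) 𝒦)
    {C : Set X} (hC : IsClosed C) (hmeet : ∀ K ∈ 𝒦, (K ∩ C).Nonempty) :
    (C ∩ ⋂₀ (nhdsKer '' 𝒦)).Nonempty := by
  by_contra hempty
  obtain ⟨_, ⟨K, hK, rfl⟩, hKC⟩ := hX.2 (nhdsKer '' 𝒦) (hne.image _)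
    (by
      rintro _ ⟨K, hK, rfl⟩
      exact ⟨(hmeet K hK).left.mono subset_nhdsKer, (hcomp K hK).nhdsKer, saturated_nhdsKer K⟩)
    (hdir.mono_comp fun _ _ h => nhdsKer_mono h)
    Cᶜ hC.isOpen_compl (fun x hx hxC => hempty ⟨x, hxC, hx⟩)
  obtain ⟨y, hyK, hyC⟩ := hmeet K hK
  exact hKC (subset_nhdsKer hyK) hyC

theorem WellFiltered.exists_isGenericPoint_closure (hX : WellFiltered X) {B : Set X}
    (hB : IsRudinSet B) : ∃ x, IsGenericPoint x (closure B) := by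
  obtain ⟨𝒦, hne, hcomp, hdir, ⟨-, hmeet⟩, hmin⟩ := hB
  obtain ⟨x, hxB, hx⟩ := hX.inter_sInter_nhdsKer_nonempty hne hcomp hdir isClosed_closure hmeet
  have hxsub : closure {x} ⊆ closure B :=
    isClosed_closure.closure_subset_iff.2 (singleton_subset_iff.2 hxB)
  have hxmeet : ∀ K ∈ 𝒦, (K ∩ closure {x}).Nonempty := by
    intro K hK
    obtain ⟨y, hyK, hxy⟩ := mem_nhdsKer_iff_specializes.1 (hx _ (mem_image_of_mem _ hK))
    exact ⟨y, hyK, hxy.mem_closure⟩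
  exact ⟨x, hxsub.antisymm (hmin ⟨isClosed_closure, hxmeet⟩ hxsub)⟩

theorem wellFiltered_iff_exists_isGenericPoint :
    WellFiltered X ↔
      T0Space X ∧ ∀ B : Set X, IsRudinSet B → ∃ x, IsGenericPoint x (closure B) := by
  refine ⟨fun hX => ⟨hX.1, fun _ => hX.exists_isGenericPoint_closure⟩, ?_⟩
  rintro ⟨hT0, hgen⟩
  refine ⟨hT0, fun 𝒦 hne h𝒦 hdir U hU hsub => ?_⟩
  by_contra! hnot
  have hcomp : ∀ K ∈ 𝒦, IsCompact K := fun K hK => (h𝒦 K hK).2.1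
  obtain ⟨C, hCU, hC⟩ := exists_minimal_isClosed_inter_nonempty hcomp hU.isClosed_compl
    fun K hK => inter_compl_nonempty_iff.2 (hnot K hK)
  have hCcl : closure C = C := hC.prop.1.closure_eq
  obtain ⟨x, hx⟩ := hgen C ⟨𝒦, hne, hcomp, hdir, hCcl.symm ▸ hC⟩
  rw [hCcl] at hx
  have hxK : x ∈ ⋂₀ 𝒦 := by
    intro K hK
    obtain ⟨y, hyK, hyC⟩ := hC.prop.2 K hK
    exact (h𝒦 K hK).2.2.stableUnderGeneralization (hx.specializes hyC) hyK
  exact hCU hx.mem (hsub hxK)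

theorem WellFiltered.subtype (hX : WellFiltered X) {A : Set X} (hA : FrontClosed A) :
    WellFiltered A := by
  obtain ⟨_, hgen⟩ := wellFiltered_iff_exists_isGenericPoint.1 hX
  refine wellFiltered_iff_exists_isGenericPoint.2 ⟨inferInstance, fun B hB => ?_⟩
  obtain ⟨x, hx⟩ := hgen _ (hB.image continuous_subtype_val)
  exact hA.exists_isGenericPoint_closure hx

end WellFiltered

section DSpace

variable {X : Type*} [TopologicalSpace X]

theorem specLUB_of_isGenericPoint_closure {D : Set X} {a : X}
    (ha : IsGenericPoint a (closure D)) : specLUB D a :=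
  ⟨specUB_iff_closure_subset.2 ha.def.ge,
    fun _ hb => specUB_iff_closure_subset.1 hb ha.mem⟩

theorem DSpace.isGenericPoint_closure_of_specLUB (hX : DSpace X) {D : Set X} (hne : D.Nonempty)
    (hD : DirectedOn specLE D) {a : X} (ha : specLUB D a) : IsGenericPoint a (closure D) := by
  have haD : a ∈ closure D := mem_closure_iff.2 fun U hU haU =>
    inter_comm D U ▸ (hX.2.2 U hU).2 D hne hD a ha haU
  exact (isClosed_closure.closure_subset_iff.2 (singleton_subset_iff.2 haD)).antisymm
    (specUB_iff_closure_subset.1 ha.1)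

theorem dSpace_iff_exists_isGenericPoint :
    DSpace X ↔ T0Space X ∧ ∀ D : Set X, D.Nonempty → DirectedOn specLE D →
      ∃ x, IsGenericPoint x (closure D) := by
  constructor
  · intro hX
    refine ⟨hX.1, fun D hne hD => ?_⟩
    obtain ⟨a, ha⟩ := hX.2.1 D hne hD
    exact ⟨a, hX.isGenericPoint_closure_of_specLUB hne hD ha⟩
  · rintro ⟨hT0, hgen⟩
    refine ⟨hT0, fun D hne hD => (hgen D hne hD).imp fun _ => specLUB_of_isGenericPoint_closure,
      fun U hU => ⟨fun x y hxy => (specLE_iff_specializes.1 hxy).mem_open hU,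
        fun D hne hD a ha haU => ?_⟩⟩
    obtain ⟨x, hx⟩ := hgen D hne hD
    have hax : specLE a x := ha.2 x (specLUB_of_isGenericPoint_closure hx).1
    have hxU : x ∈ U := (specLE_iff_specializes.1 hax).mem_open hU haU
    exact (closure_inter_open_nonempty_iff hU).1 ⟨x, hx.mem, hxU⟩

theorem DSpace.subtype (hX : DSpace X) {A : Set X} (hA : FrontClosed A) : DSpace A := by
  obtain ⟨_, hgen⟩ := dSpace_iff_exists_isGenericPoint.1 hX
  refine dSpace_iff_exists_isGenericPoint.2 ⟨inferInstance, fun D hne hD => ?_⟩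
  obtain ⟨x, hx⟩ := hgen _ (hne.image _) (directedOn_specLE_image hD continuous_subtype_val)
  exact hA.exists_isGenericPoint_closure hx

end DSpace

theorem stmt7_general (X : Type*) [TopologicalSpace X] (A : Set X) (hA : FrontClosed A) :
    (Sober X → Sober ↥A) ∧
    (WellFiltered X → WellFiltered ↥A) ∧
    (DSpace X → DSpace ↥A) :=
  ⟨fun hX => hX.subtype hA, fun hX => hX.subtype hA, fun hX => hX.subtype hA⟩

/-- Closed subsets and saturated subsets (with the subspace topology)
inherit sobriety, well-filteredness and the d-space property. -/
theorem stmt7 (X : Type*) [TopologicalSpace X] (A : Set X)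
    (hA : IsClosed A ∨ Saturated A) :
    (Sober X → Sober ↥A) ∧
    (WellFiltered X → WellFiltered ↥A) ∧
    (DSpace X → DSpace ↥A) :=
  stmt7_general X A (hA.elim frontClosed_of_isClosed Saturated.frontClosed)
end

section
/- Let 𝐊 be a class of T0 topological spaces such that: every sober space is a 𝐊-space; any space homeomorphic to a 𝐊-space is a 𝐊-space; every 𝐊-space is a d-space; and 𝐊 is adequate. Then for any poset P the following are equivalent: (1) Σ 𝐊(Σ P), the set 𝐊(Σ P) ordered by inclusion with the Scott topology, is a 𝐊-space; (2) the 𝐊-reflection of Σ P exists and is a Scott space, i.e. there exist a poset Q and a continuous map ξ : Σ P → Σ Q such that Σ Q is a 𝐊-space and ⟨Σ Q, ξ⟩ is a 𝐊-reflection of Σ P. Moreover, when (1) holds, ⟨Σ 𝐊(Σ P), η⟩ with η(x) = ↓x (the Scott closure of {x}) is a 𝐊-reflection of Σ P. -/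
universe u v

open Set

/-!
The space `P_H(𝐊(X))` with `x ↦ closure {x}` is always a 𝐊-reflection of `X`, and its specialization
order is inclusion. Since 𝐊-spaces are d-spaces, the Scott topology on `𝐊(X)` refines the lower
Vietoris topology. If the finer space is also a 𝐊-space, the universal property collapses the two
topologies into one. Conversely, a Scott space that is a 𝐊-reflection is homeomorphic to
`P_H(𝐊(X))`, and a space homeomorphic to a Scott space carries the Scott topology of its own
specialization order, so again the two topologies agree.
-/

open scoped Topology

section Closure

variable {X Y : Type*} [TopologicalSpace X]

theorem eq_of_closure_singleton_eq [T0Space X] {x y : X}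
    (h : closure ({x} : Set X) = closure {y}) : x = y :=
  (inseparable_iff_closure_eq.2 h).eq

theorem closure_image_eq_closure_singleton [TopologicalSpace Y] {f : X → Y} (hf : Continuous f)
    {s : Set X} {x : X} (hs : closure s = closure {x}) : closure (f '' s) = closure {f x} := by
  rw [← closure_image_closure hf, hs, closure_image_closure hf, image_singleton]

end Closure

section ScottTopology

variable {P Q : Type*}

theorem isScott_scottTop (P : Type*) [Preorder P] : @Topology.IsScott P univ _ (scottTop P) := by
  have hscott : @Topology.IsScott P univ _ (Topology.scott P univ) :=
    @Topology.IsScott.mk P univ _ (Topology.scott P univ) rfl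
  refine @Topology.IsScott.mk P univ _ (scottTop P) (TopologicalSpace.ext_iff.2 fun U => ?_)
  rw [@Topology.IsScott.isOpen_iff_isUpperSet_and_dirSupInaccOn P univ _ (Topology.scott P univ) U,
    dirSupInaccOn_univ]
  rfl

theorem t0Space_scottTop (P : Type*) [PartialOrder P] : @T0Space P (scottTop P) := by
  let := scottTop P
  have := isScott_scottTop P
  infer_instance

theorem closure_scottTop_singleton [Preorder P] (x : P) : closure[scottTop P] {x} = Iic x := by
  let := scottTop P
  have := isScott_scottTop P
  exact Topology.IsScott.closure_singleton

theorem continuous_scottTop_iff [Preorder P] [Preorder Q] {f : P → Q} :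
    Continuous[scottTop P, scottTop Q] f ↔ ScottContinuous f := by
  let := scottTop P
  let := scottTop Q
  have := isScott_scottTop P
  have := isScott_scottTop Q
  rw [← scottContinuousOn_univ]
  exact (Topology.IsScott.scottContinuousOn_iff_continuous fun _ _ _ => mem_univ _).symm

theorem scottTop_eq_induced [Preorder P] [Preorder Q] (e : P ≃o Q) :
    scottTop P = (scottTop Q).induced e := by
  let := scottTop P
  let := scottTop Q
  have he : Continuous e := continuous_scottTop_iff.2 fun _ _ _ _ ha => e.isLUB_image'.2 ha
  have he' : Continuous e.symm :=
    continuous_scottTop_iff.2 fun _ _ _ _ ha => e.symm.isLUB_image'.2 ha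
  exact (Homeomorph.mk e.toEquiv he he').isInducing.eq_induced

theorem scottTop_eq_of_homeomorph [Preorder P] [Preorder Q] {t : TopologicalSpace P}
    (hspec : ∀ a b : P, a ∈ closure {b} ↔ a ≤ b) (h : @Homeomorph P Q t (scottTop Q)) :
    scottTop P = t := by
  let := scottTop Q
  have hle (a b : P) : h a ≤ h b ↔ a ≤ b := by
    rw [← hspec, ← specializes_iff_mem_closure, ← h.isInducing.specializes_iff,
      specializes_iff_mem_closure, closure_scottTop_singleton, mem_Iic]
  let e : P ≃o Q := ⟨h.toEquiv, hle _ _⟩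
  exact (scottTop_eq_induced e).trans h.isInducing.eq_induced.symm

theorem DSpace.scottTop_le [Preorder P] [t : TopologicalSpace P] (h : DSpace P)
    (hspec : ∀ a b : P, a ∈ closure {b} ↔ a ≤ b) : scottTop P ≤ t := by
  intro U hU
  have hle : (specLE : P → P → Prop) = (· ≤ ·) := funext₂ fun a b => propext (hspec a b)
  have hscott := h.2.2 U hU
  simp only [ScottOpenSpec, specLUB, specUB, hle] at hscott
  exact ⟨fun a b hab ha => hscott.1 a b hab ha,
    fun D hne hdir a ha => hscott.2 D hne hdir a ⟨ha.1, fun _ hb => ha.2 hb⟩⟩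

theorem continuous_scottTop_of_coe_eq_Iic [Preorder P] {G : Set (Set P)}
    (hG : ∀ A ∈ G, IsClosed[scottTop P] A) {η : P → ↥G} (hη : ∀ x, (η x : Set P) = Iic x) :
    Continuous[scottTop P, scottTop ↥G] η := by
  let := scottTop P
  have := isScott_scottTop P
  have hle (x : P) (A : ↥G) : η x ≤ A ↔ x ∈ (A : Set P) := by
    rw [← Subtype.coe_le_coe, hη]
    exact ⟨fun h => h self_mem_Iic,
      fun h _ hy => Topology.IsScott.isLowerSet_of_isClosed (hG A A.2) hy h⟩
  refine continuous_scottTop_iff.2 fun D hne hdir a ha => ⟨?_, fun A hA => (hle a A).2 ?_⟩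
  · rintro _ ⟨d, hd, rfl⟩
    rw [hle, hη]
    exact ha.1 hd
  · have hDA : D ⊆ (A : Set P) := fun d hd => (hle d A).1 (hA (mem_image_of_mem η hd))
    exact Topology.IsScott.dirSupClosed_of_isClosed (hG A A.2) hDA hne hdir ha

end ScottTopology

section LowerVietoris

variable {X Z : Type*} [TopologicalSpace X] {G : Set (Set X)}

theorem isOpen_lowerVietoris_setOf_inter_nonempty (G : Set (Set X)) {U : Set X} (hU : IsOpen U) :
    IsOpen[lowerVietoris G] {A : ↥G | ((A : Set X) ∩ U).Nonempty} :=
  TopologicalSpace.isOpen_generateFrom_of_mem ⟨U, hU, rfl⟩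

theorem mem_closure_lowerVietoris_singleton_iff {A B : ↥G} :
    A ∈ closure[lowerVietoris G] {B} ↔ (A : Set X) ⊆ closure (B : Set X) := by
  let := lowerVietoris G
  refine ⟨fun h x hxA => mem_closure_iff.2 fun U hU hxU => ?_, fun h => ?_⟩
  · obtain ⟨_, hBU, rfl⟩ := mem_closure_iff.1 h _
      (isOpen_lowerVietoris_setOf_inter_nonempty G hU) ⟨x, hxA, hxU⟩
    rwa [inter_comm]
  · have hnhds : pure B ≤ 𝓝 A := by
      refine Filter.tendsto_id'.1 (TopologicalSpace.tendsto_nhds_generateFrom_iff.2 ?_)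
      rintro _ ⟨U, hU, rfl⟩ ⟨x, hxA, hxU⟩
      exact (closure_inter_open_nonempty_iff hU).1 ⟨x, h hxA, hxU⟩
    exact specializes_iff_mem_closure.1 (specializes_iff_pure.2 hnhds)

theorem continuous_lowerVietoris_of_coe_eq_closure_singleton {η : X → ↥G}
    (hη : ∀ x, (η x : Set X) = closure {x}) : Continuous[_, lowerVietoris G] η := by
  refine continuous_generateFrom_iff.2 ?_
  rintro _ ⟨U, hU, rfl⟩
  have hpre : η ⁻¹' {A : ↥G | ((A : Set X) ∩ U).Nonempty} = U := by
    ext x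
    rw [mem_preimage, mem_ofPred_eq, hη, closure_inter_open_nonempty_iff hU,
      singleton_inter_nonempty]
  rwa [hpre]

theorem continuous_lowerVietoris_of_closure_image_eq [TopologicalSpace Z] {f : X → Z}
    (hf : Continuous f) {g : ↥G → Z}
    (hg : ∀ A : ↥G, closure (f '' (A : Set X)) = closure {g A}) :
    Continuous[lowerVietoris G, _] g := by
  refine @Continuous.mk _ _ (lowerVietoris G) _ _ fun U hU => ?_
  have hpre : g ⁻¹' U = {A : ↥G | ((A : Set X) ∩ f ⁻¹' U).Nonempty} := by
    ext A
    rw [mem_preimage, mem_ofPred_eq, ← singleton_inter_nonempty,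
      ← closure_inter_open_nonempty_iff hU, ← hg, closure_inter_open_nonempty_iff hU,
      image_inter_nonempty_iff]
  rw [hpre]
  exact isOpen_lowerVietoris_setOf_inter_nonempty G (hU.preimage hf)

end LowerVietoris

section Reflection

variable {K : (Y : Type u) → TopologicalSpace Y → Prop}

section KSets

variable {X : Type u} [tX : TopologicalSpace X]

theorem closure_singleton_mem_KSets
    (hT0 : ∀ (Y : Type u) (tY : TopologicalSpace Y), K Y tY → @T0Space Y tY) (x : X) :
    closure {x} ∈ KSets K X := by
  refine ⟨isClosed_closure, fun Y tY hY f hf => ?_⟩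
  have := hT0 Y tY hY
  have hfx : closure (f '' closure {x}) = closure {f x} :=
    closure_image_eq_closure_singleton hf closure_closure
  exact ⟨f x, hfx, fun _ hy => eq_of_closure_singleton_eq (hy.symm.trans hfx)⟩

theorem mem_closure_lowerVietoris_KSets_singleton_iff (A B : ↥(KSets K X)) :
    A ∈ closure[lowerVietoris (KSets K X)] {B} ↔ A ≤ B := by
  rw [mem_closure_lowerVietoris_singleton_iff, B.2.1.closure_eq]
  rfl

theorem closure_lowerVietoris_image_eq (hK : K ↥(KSets K X) (lowerVietoris (KSets K X)))
    {η : X → ↥(KSets K X)} (hη : ∀ x, (η x : Set X) = closure {x}) (A : ↥(KSets K X)) :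
    closure[lowerVietoris (KSets K X)] (η '' (A : Set X)) =
      closure[lowerVietoris (KSets K X)] {A} := by
  let := lowerVietoris (KSets K X)
  have hηA : η '' (A : Set X) ⊆ closure {A} := by
    rintro _ ⟨x, hx, rfl⟩
    rw [mem_closure_lowerVietoris_KSets_singleton_iff, ← Subtype.coe_le_coe, hη]
    exact closure_minimal (singleton_subset_iff.2 hx) A.2.1
  -- The image of `A` has a generic point `B` because `A` is a 𝐊-set; the claim is that `B = A`.
  obtain ⟨B, hB : closure (η '' (A : Set X)) = closure {B}, -⟩ :=
    A.2.2 _ _ hK η (continuous_lowerVietoris_of_coe_eq_closure_singleton hη)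
  have hAB : A ≤ B := fun x hx => by
    have hηB : η x ≤ B := by
      rw [← mem_closure_lowerVietoris_KSets_singleton_iff, ← hB]
      exact subset_closure (mem_image_of_mem η hx)
    exact hηB (hη x ▸ subset_closure rfl)
  have hBA : B ≤ A := by
    rw [← mem_closure_lowerVietoris_KSets_singleton_iff]
    exact closure_minimal hηA isClosed_closure (hB ▸ subset_closure rfl)
  rw [hB, le_antisymm hAB hBA]

theorem isKReflection_lowerVietoris
    (hT0 : ∀ (Y : Type u) (tY : TopologicalSpace Y), K Y tY → @T0Space Y tY)
    (hK : K ↥(KSets K X) (lowerVietoris (KSets K X)))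
    {η : X → ↥(KSets K X)} (hη : ∀ x, (η x : Set X) = closure {x}) :
    IsKReflection K X tX _ (lowerVietoris (KSets K X)) η := by
  let := lowerVietoris (KSets K X)
  refine ⟨hK, continuous_lowerVietoris_of_coe_eq_closure_singleton hη, fun Y tY hY f hf => ?_⟩
  have := hT0 Y tY hY
  have hgen (A : ↥(KSets K X)) : ∃ y, closure (f '' (A : Set X)) = closure {y} :=
    (A.2.2 Y tY hY f hf).exists
  choose g hg using hgen
  refine ⟨g, ⟨continuous_lowerVietoris_of_closure_image_eq hf hg, ?_⟩, ?_⟩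
  · funext x
    refine eq_of_closure_singleton_eq ?_
    rw [Function.comp_apply, ← hg, hη, closure_image_eq_closure_singleton hf closure_closure]
  · rintro g' ⟨hg', rfl⟩
    funext A
    refine eq_of_closure_singleton_eq ?_
    rw [← hg, image_comp,
      closure_image_eq_closure_singleton hg' (closure_lowerVietoris_image_eq hK hη A)]

end KSets

namespace IsKReflection

variable {X Z W : Type u} {tX : TopologicalSpace X} {tZ : TopologicalSpace Z}
  {tW : TopologicalSpace W} {η : X → Z} {ξ : X → W}

theorem eq_id (h : IsKReflection K X tX Z tZ η) {g : Z → Z} (hg : Continuous g)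
    (hgη : g ∘ η = η) : g = id :=
  (h.2.2 Z tZ h.1 η h.2.1).unique ⟨hg, hgη⟩ ⟨continuous_id, rfl⟩

theorem nonempty_homeomorph (h : IsKReflection K X tX Z tZ η) (k : IsKReflection K X tX W tW ξ) :
    Nonempty (Z ≃ₜ W) := by
  obtain ⟨g, ⟨hg, hgη⟩, -⟩ := h.2.2 W tW k.1 ξ k.2.1
  obtain ⟨f, ⟨hf, hfξ⟩, -⟩ := k.2.2 Z tZ h.1 η h.2.1
  have hfg : f ∘ g = id := h.eq_id (hf.comp hg) (by rw [Function.comp_assoc, hgη, hfξ])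
  have hgf : g ∘ f = id := k.eq_id (hg.comp hf) (by rw [Function.comp_assoc, hfξ, hgη])
  exact ⟨⟨⟨g, f, congrFun hfg, congrFun hgf⟩, hg, hf⟩⟩

theorem topology_eq_of_le (h : IsKReflection K X tX Z tZ η) {t : TopologicalSpace Z} (hle : t ≤ tZ)
    (ht : K Z t) (hη : Continuous[tX, t] η) : t = tZ := by
  obtain ⟨g, ⟨hg, hgη⟩, -⟩ := h.2.2 Z t ht η hη
  obtain rfl : g = id := h.eq_id (continuous_le_rng hle hg) hgη
  exact le_antisymm hle (continuous_id_iff_le.1 hg)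

end IsKReflection

end Reflection

theorem stmt9_general
    (K : (Y : Type u) → TopologicalSpace Y → Prop)
    (hT0 : ∀ (Y : Type u) (tY : TopologicalSpace Y), K Y tY → @T0Space Y tY)
    (P : Type u) [PartialOrder P]
    (hK : K ↥(@KSets K P (scottTop P)) (@lowerVietoris P (scottTop P) (@KSets K P (scottTop P))))
    (hD : @DSpace ↥(@KSets K P (scottTop P))
      (@lowerVietoris P (scottTop P) (@KSets K P (scottTop P)))) :
    (∀ x : P, {p : P | p ≤ x} ∈ @KSets K P (scottTop P)) ∧
    ∀ η : P → ↥(@KSets K P (scottTop P)),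
      (∀ x : P, (η x : Set P) = {p : P | p ≤ x}) →
      (K ↥(@KSets K P (scottTop P)) (scottTop ↥(@KSets K P (scottTop P))) ↔
        ∃ (Q : Type u) (pQ : PartialOrder Q) (ξ : P → Q),
          IsKReflection K P (scottTop P) Q (@scottTop Q pQ.toPreorder) ξ) ∧
      (K ↥(@KSets K P (scottTop P)) (scottTop ↥(@KSets K P (scottTop P))) →
        IsKReflection K P (scottTop P) ↥(@KSets K P (scottTop P))
          (scottTop ↥(@KSets K P (scottTop P))) η) := by
  let := scottTop P
  have hIic (x : P) : {p | p ≤ x} = closure {x} := (closure_scottTop_singleton x).symm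
  refine ⟨fun x => hIic x ▸ closure_singleton_mem_KSets hT0 x, fun η hη => ?_⟩
  have hrefl : IsKReflection K P (scottTop P) _ (lowerVietoris (KSets K P)) η :=
    isKReflection_lowerVietoris hT0 hK fun x => (hη x).trans (hIic x)
  have hle : scottTop ↥(KSets K P) ≤ lowerVietoris (KSets K P) :=
    DSpace.scottTop_le (t := lowerVietoris _) hD mem_closure_lowerVietoris_KSets_singleton_iff
  have hscott (h : K ↥(KSets K P) (scottTop ↥(KSets K P))) :
      IsKReflection K P (scottTop P) _ (scottTop ↥(KSets K P)) η := by
    rwa [hrefl.topology_eq_of_le hle h (continuous_scottTop_of_coe_eq_Iic (fun _ hA => hA.1) hη)]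
  refine ⟨⟨fun h => ⟨_, inferInstance, η, hscott h⟩, ?_⟩, hscott⟩
  rintro ⟨Q, pQ, ξ, hξ⟩
  obtain ⟨e⟩ := hrefl.nonempty_homeomorph hξ
  rwa [scottTop_eq_of_homeomorph mem_closure_lowerVietoris_KSets_singleton_iff e]

/-- For a poset `P`, the `𝐊`-reflection of `Σ P` exists and is a Scott space
iff `Σ 𝐊(Σ P)` is a `𝐊`-space; in which case `⟨Σ 𝐊(Σ P), η⟩` with `η x = ↓x` is a
`𝐊`-reflection of `Σ P`. -/
theorem stmt9
    (K : (Y : Type u) → TopologicalSpace Y → Prop)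
    (hT0 : ∀ (Y : Type u) (tY : TopologicalSpace Y), K Y tY → @T0Space Y tY)
    (hSober : ∀ (Y : Type u) (tY : TopologicalSpace Y), @Sober Y tY → K Y tY)
    (hHomeo : ∀ (Y : Type u) (tY : TopologicalSpace Y) (Z : Type u) (tZ : TopologicalSpace Z),
      K Y tY → Nonempty (@Homeomorph Y Z tY tZ) → K Z tZ)
    (hD : ∀ (Y : Type u) (tY : TopologicalSpace Y), K Y tY → @DSpace Y tY)
    (hAdeq : Adequate K)
    (P : Type u) [PartialOrder P] :
    (∀ x : P, {p : P | p ≤ x} ∈ @KSets K P (scottTop P)) ∧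
    ∀ η : P → ↥(@KSets K P (scottTop P)),
      (∀ x : P, (η x : Set P) = {p : P | p ≤ x}) →
      (K ↥(@KSets K P (scottTop P)) (scottTop ↥(@KSets K P (scottTop P))) ↔
        ∃ (Q : Type u) (pQ : PartialOrder Q) (ξ : P → Q),
          IsKReflection K P (scottTop P) Q (@scottTop Q pQ.toPreorder) ξ) ∧
      (K ↥(@KSets K P (scottTop P)) (scottTop ↥(@KSets K P (scottTop P))) →
        IsKReflection K P (scottTop P) ↥(@KSets K P (scottTop P))
          (scottTop ↥(@KSets K P (scottTop P))) η) :=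
  stmt9_general K hT0 P (hAdeq P _ (t0Space_scottTop P)) (hD _ _ (hAdeq P _ (t0Space_scottTop P)))
end
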